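/- Let Ω ⊆ ℝ² be open, Y = {y₁,…,y_N} ⊆ ℝ² distinct points, ψ ∈ (0,∞)^N, and G(x,y,v) = 1/(2v) − (v/2)‖x − y‖². Define the weighted points pᵢ = (ψᵢyᵢ/2, −ψᵢ/4) ∈ ℝ³ and weights rᵢ = ψᵢ²/16 + ψᵢ²‖yᵢ‖²/4 − ψᵢ‖yᵢ‖²/2 + 1/(2ψᵢ). Then for every i ∈ {1,…,N}, the generalized Laguerre cell Lagᵢ(ψ) = {x ∈ Ω : ∀ j, G(x,yᵢ,ψᵢ) ≥ G(x,y_j,ψ_j)} satisfies Lagᵢ(ψ) = Π(Powᵢ(𝒫) ∩ P) ∩ Ω, where P = {(x₁,x₂,x₁² + x₂²) : (x₁,x₂) ∈ ℝ²} is the paraboloid in ℝ³, Π(x₁,x₂,x₃) = (x₁,x₂) is the projection onto ℝ², and Powᵢ(𝒫) = {z ∈ ℝ³ : ∀ j, ‖z − pᵢ‖² − rᵢ ≤ ‖z − p_j‖² − r_j} is the i-th power cell of 𝒫 = ((pᵢ,rᵢ))_{1≤i≤N}. -/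

import Mathlib

set_option autoImplicit false

open MeasureTheory Set

noncomputable section

/-- Build a point of `ℝ³` from coordinates. -/
def e3 (a b c : ℝ) : EuclideanSpace ℝ (Fin 3) := (WithLp.equiv 2 (Fin 3 → ℝ)).symm ![a, b, c]

/-- Build a point of `ℝ²` from coordinates. -/
def e2 (a b : ℝ) : EuclideanSpace ℝ (Fin 2) := (WithLp.equiv 2 (Fin 2 → ℝ)).symm ![a, b]

/-!
On the paraboloid, both the power distance of `z = (x, ‖x‖ ^ 2)` to a weighted point, up to the
common term `‖z‖ ^ 2`, and the function `c - l * ‖x - y‖ ^ 2` are affine in `(x, ‖x‖ ^ 2)`. The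
weighted point is chosen so that one is the negative of the other; minimizing the power distance is
then maximizing `c - l * ‖x - y‖ ^ 2`.
-/

section MobiusDiagram

variable {ι E F : Type*}

/-- The `i`-th cell of the power diagram of the weighted points `(p j, r j)`. -/
def powerCell [SeminormedAddCommGroup F] (p : ι → F) (r : ι → ℝ) (i : ι) : Set F :=
  {z | ∀ j, ‖z - p i‖ ^ 2 - r i ≤ ‖z - p j‖ ^ 2 - r j}

/-- The `i`-th cell of the Möbius diagram of the sites `y j` with multipliers `l j` and offsets
`c j`, i.e. the set where the `i`-th function `x ↦ c j - l j * ‖x - y j‖ ^ 2` is maximal. The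
Laguerre cells of the reflector problem are the case `l = ψ / 2`, `c = 1 / (2 * ψ)`. -/
def mobiusCell [SeminormedAddCommGroup E] (y : ι → E) (l c : ι → ℝ) (i : ι) : Set E :=
  {x | ∀ j, c j - l j * ‖x - y j‖ ^ 2 ≤ c i - l i * ‖x - y i‖ ^ 2}

/-- The paraboloid over `E`, in the `L²` product `E × ℝ` so that norms there are Euclidean. -/
def paraboloid (E : Type*) [Norm E] : Set (WithLp 2 (E × ℝ)) :=
  {z | z.snd = ‖z.fst‖ ^ 2}

/-- The point of the paraboloid above `x`. -/
def paraboloidLift [Norm E] (x : E) : WithLp 2 (E × ℝ) :=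
  WithLp.toLp 2 (x, ‖x‖ ^ 2)

/-- The centre, in `E × ℝ`, of the weighted point that represents the function
`x ↦ c - l * ‖x - y‖ ^ 2` in the power diagram. -/
def mobiusSite [SMul ℝ E] (y : E) (l : ℝ) : WithLp 2 (E × ℝ) :=
  WithLp.toLp 2 (l • y, -l / 2)

/-- The weight of the weighted point that represents the function `x ↦ c - l * ‖x - y‖ ^ 2` in
the power diagram. -/
def mobiusWeight [Norm E] (y : E) (l c : ℝ) : ℝ :=
  l ^ 2 / 4 + l ^ 2 * ‖y‖ ^ 2 - l * ‖y‖ ^ 2 + c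

theorem preimage_powerCell [SeminormedAddCommGroup E] [SeminormedAddCommGroup F]
    [NormedSpace ℝ E] [NormedSpace ℝ F] (Φ : E →ₗᵢ[ℝ] F) (p : ι → E) (r : ι → ℝ) (i : ι) :
    Φ ⁻¹' powerCell (Φ ∘ p) r i = powerCell p r i := by
  simp only [powerCell, preimage_ofPred_eq, Function.comp_apply, ← map_sub, Φ.norm_map]

theorem image_fst_inter_paraboloid [Norm E] (S : Set (WithLp 2 (E × ℝ))) :
    WithLp.fst '' (S ∩ paraboloid E) = paraboloidLift ⁻¹' S := by
  ext x
  constructor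
  · rintro ⟨z, ⟨hzS, hz⟩, rfl⟩
    have lift_fst : paraboloidLift z.fst = z := WithLp.ofLp_injective 2 (Prod.ext rfl hz.symm)
    rwa [mem_preimage, lift_fst]
  · exact fun hx ↦ ⟨paraboloidLift x, ⟨hx, rfl⟩, rfl⟩

section InnerProductSpace

variable [SeminormedAddCommGroup E] [InnerProductSpace ℝ E]

theorem sq_norm_paraboloidLift_sub_mobiusSite (x y : E) (l c : ℝ) :
    ‖paraboloidLift x - mobiusSite y l‖ ^ 2 - mobiusWeight y l c =
      ‖paraboloidLift x‖ ^ 2 - (c - l * ‖x - y‖ ^ 2) := by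
  have expand_site : ‖x - l • y‖ ^ 2 = ‖x‖ ^ 2 - 2 * (l * inner ℝ x y) + l ^ 2 * ‖y‖ ^ 2 := by
    rw [norm_sub_sq_real, real_inner_smul_right, norm_smul, mul_pow, Real.norm_eq_abs, sq_abs]
  simp only [paraboloidLift, mobiusSite, mobiusWeight, WithLp.prod_norm_sq_eq_of_L2,
    WithLp.sub_fst, WithLp.sub_snd, WithLp.toLp_fst, WithLp.toLp_snd, Real.norm_eq_abs, sq_abs,
    expand_site, norm_sub_sq_real x y]
  ring

theorem preimage_paraboloidLift_powerCell (y : ι → E) (l c : ι → ℝ) (i : ι) :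
    paraboloidLift ⁻¹' powerCell (fun j ↦ mobiusSite (y j) (l j))
      (fun j ↦ mobiusWeight (y j) (l j) (c j)) i = mobiusCell y l c i := by
  simp only [powerCell, mobiusCell, preimage_ofPred_eq, sq_norm_paraboloidLift_sub_mobiusSite,
    sub_le_sub_iff_left]

theorem laguerre_eq_power_diagram_on_paraboloid_general [SeminormedAddCommGroup F]
    [NormedSpace ℝ F] (Φ : F ≃ₗᵢ[ℝ] WithLp 2 (E × ℝ)) (Ω : Set E) (y : ι → E) (l c : ι → ℝ)
    (p : ι → F) (r : ι → ℝ) (hp : ∀ j, Φ (p j) = mobiusSite (y j) (l j))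
    (hr : ∀ j, r j = mobiusWeight (y j) (l j) (c j)) (i : ι) :
    Ω ∩ mobiusCell y l c i =
      (fun z ↦ (Φ z).fst) '' (powerCell p r i ∩ Φ ⁻¹' paraboloid E) ∩ Ω := by
  have hΦp : Φ.toLinearIsometry ∘ p = fun j ↦ mobiusSite (y j) (l j) := funext hp
  have powerCell_eq : powerCell p r i = Φ ⁻¹' powerCell (fun j ↦ mobiusSite (y j) (l j)) r i := by
    rw [← preimage_powerCell Φ.toLinearIsometry, hΦp, Φ.coe_toLinearIsometry]
  rw [powerCell_eq, ← preimage_inter, ← image_image WithLp.fst Φ, image_preimage_eq _ Φ.surjective,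
    image_fst_inter_paraboloid, funext hr, preimage_paraboloidLift_powerCell, inter_comm]

end InnerProductSpace

end MobiusDiagram

/-- The isometry `ℝⁿ⁺¹ ≃ ℝⁿ × ℝ` that splits off the last coordinate. -/
def euclideanInitLastEquiv (n : ℕ) :
    EuclideanSpace ℝ (Fin (n + 1)) ≃ₗᵢ[ℝ] WithLp 2 (EuclideanSpace ℝ (Fin n) × ℝ) where
  toFun z := WithLp.toLp 2 (WithLp.toLp 2 (Fin.init z), z (Fin.last n))
  invFun w := WithLp.toLp 2 (Fin.snoc (α := fun _ ↦ ℝ) w.fst w.snd)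
  map_add' _ _ := rfl
  map_smul' _ _ := rfl
  left_inv z := by simp
  right_inv w := WithLp.ofLp_injective 2 (Prod.ext (by simp) (by simp))
  norm_map' z := by
    rw [← sq_eq_sq₀ (norm_nonneg _) (norm_nonneg _), WithLp.prod_norm_sq_eq_of_L2,
      EuclideanSpace.real_norm_sq_eq, EuclideanSpace.real_norm_sq_eq, Fin.sum_univ_castSucc,
      Real.norm_eq_abs, sq_abs]
    rfl

theorem fst_euclideanInitLastEquiv_two (z : EuclideanSpace ℝ (Fin 3)) :
    (euclideanInitLastEquiv 2 z).fst = e2 (z 0) (z 1) := by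
  ext k
  fin_cases k <;> rfl

theorem euclideanInitLastEquiv_e3_eq_mobiusSite (y : EuclideanSpace ℝ (Fin 2)) (l : ℝ) :
    euclideanInitLastEquiv 2 (e3 (l * y 0) (l * y 1) (-l / 2)) = mobiusSite y l := by
  refine WithLp.ofLp_injective 2 (Prod.ext ?_ rfl)
  ext k
  fin_cases k <;> rfl

theorem preimage_euclideanInitLastEquiv_two_paraboloid :
    euclideanInitLastEquiv 2 ⁻¹' paraboloid (EuclideanSpace ℝ (Fin 2)) =
      {z | z 2 = z 0 ^ 2 + z 1 ^ 2} := by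
  ext z
  rw [mem_preimage, paraboloid, mem_ofPred_eq, EuclideanSpace.real_norm_sq_eq, Fin.sum_univ_two]
  rfl

/-- Proposition 4.5: the Laguerre cells of the near-field reflector generating function
are obtained by intersecting a 3D power diagram with the paraboloid `x₃ = x₁² + x₂²`
and projecting to the plane. -/
theorem laguerre_eq_power_diagram_on_paraboloid
    (Ω : Set (EuclideanSpace ℝ (Fin 2))) (hΩo : IsOpen Ω) (hΩb : Bornology.IsBounded Ω)
    {N : ℕ} (y : Fin N → EuclideanSpace ℝ (Fin 2)) (hy : Function.Injective y)
    (ψ : Fin N → ℝ) (hψ : ∀ i, 0 < ψ i)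
    (p : Fin N → EuclideanSpace ℝ (Fin 3)) (r : Fin N → ℝ)
    (hp : ∀ i, p i = e3 (ψ i / 2 * y i 0) (ψ i / 2 * y i 1) (-ψ i / 4))
    (hr : ∀ i, r i = ψ i ^ 2 / 16 + ψ i ^ 2 * ‖y i‖ ^ 2 / 4 - ψ i * ‖y i‖ ^ 2 / 2
      + 1 / (2 * ψ i)) :
    ∀ i : Fin N,
      {x ∈ Ω | ∀ j, 1 / (2 * ψ j) - ψ j / 2 * ‖x - y j‖ ^ 2 ≤
        1 / (2 * ψ i) - ψ i / 2 * ‖x - y i‖ ^ 2} =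
      ((fun z : EuclideanSpace ℝ (Fin 3) => e2 (z 0) (z 1)) ''
        ({z : EuclideanSpace ℝ (Fin 3) | ∀ j, ‖z - p i‖ ^ 2 - r i ≤ ‖z - p j‖ ^ 2 - r j} ∩
         {z : EuclideanSpace ℝ (Fin 3) | z 2 = (z 0) ^ 2 + (z 1) ^ 2})) ∩ Ω := by
  have hsite (j : Fin N) : euclideanInitLastEquiv 2 (p j) = mobiusSite (y j) (ψ j / 2) := by
    rw [← euclideanInitLastEquiv_e3_eq_mobiusSite, hp]
    ring_nf
  have hweight (j : Fin N) : r j = mobiusWeight (y j) (ψ j / 2) (1 / (2 * ψ j)) := by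
    rw [hr, mobiusWeight]
    ring
  simp_rw [← preimage_euclideanInitLastEquiv_two_paraboloid, ← fst_euclideanInitLastEquiv_two]
  exact laguerre_eq_power_diagram_on_paraboloid_general (euclideanInitLastEquiv 2) Ω y _ _ p r hsite
    hweight
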